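/- The involution τ of ZMod 6 defined by τ(i) = i + 3, i.e., the Gauss diagram with chords {0,3},{1,4},{2,5}, is a fixed-point-free involution fixed by the Fox–Hatcher move ρ, and it is the UNIQUE fixed-point-free involution of ZMod 6 with ρ(σ) = σ. (This is the unique Gauss diagram constituting the Type III cycle.) -/

import Mathlib

/-- The set of Gauss diagrams: fixed-point-free involutions of `ZMod m`. -/
def gaussSet (m : ℕ) : Set (Equiv.Perm (ZMod m)) :=
  {σ | σ * σ = 1 ∧ ∀ i, σ i ≠ i}

/-- The Fox–Hatcher move on Gauss diagrams: conjugation `σ ↦ r ∘ σ ∘ r⁻¹` by the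
rotation `r : i ↦ i + 1` of `ZMod m`. -/
def fhMove (m : ℕ) (σ : Equiv.Perm (ZMod m)) : Equiv.Perm (ZMod m) :=
  (Equiv.addRight (1 : ZMod m)) * σ * (Equiv.addRight (1 : ZMod m))⁻¹

/-- The involution `τ(i) = i + 3` of `ZMod 6`, i.e. the Gauss diagram with chords
`{0,3},{1,4},{2,5}`, is a fixed-point-free involution fixed by the Fox–Hatcher move,
and it is the unique such fixed point (the unique Gauss diagram of the Type III cycle). -/
theorem typeIII_unique_fixed_point :
    (Equiv.addRight (3 : ZMod 6) : Equiv.Perm (ZMod 6)) =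
      Equiv.swap 0 3 * Equiv.swap 1 4 * Equiv.swap 2 5 ∧
    (Equiv.addRight (3 : ZMod 6) : Equiv.Perm (ZMod 6)) ∈ gaussSet 6 ∧
    fhMove 6 (Equiv.addRight (3 : ZMod 6)) = Equiv.addRight (3 : ZMod 6) ∧
    (∀ σ ∈ gaussSet 6, fhMove 6 σ = σ → σ = Equiv.addRight (3 : ZMod 6)) := by
  refine ⟨by ext i; revert i; decide, ⟨by ext i; revert i; decide, by decide⟩,
    by ext i; revert i; unfold fhMove; decide, ?_⟩
  rintro σ ⟨hinv, hfix⟩ hσ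
  have hstep : ∀ i, σ (i + 1) = σ i + 1 := by
    intro i
    have h := congrArg (fun f : Equiv.Perm (ZMod 6) => f (i + 1)) hσ
    simpa [fhMove, Equiv.Perm.mul_apply] using h.symm
  have hnat : ∀ n : ℕ, σ (n : ZMod 6) = n + σ 0 := by
    intro n
    induction n with
    | zero => simp
    | succ k ih => push_cast; rw [hstep, ih]; ring
  have hall : ∀ i, σ i = i + σ 0 := by
    intro i
    have h := hnat i.val
    rwa [ZMod.natCast_zmod_val] at h
  have h0 : σ (σ 0) = 0 := by
    have h := congrArg (fun f : Equiv.Perm (ZMod 6) => f 0) hinv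
    simpa using h
  rw [hall] at h0
  have key : ∀ c : ZMod 6, c + c = 0 → c ≠ 0 → c = 3 := by decide
  have hc := key (σ 0) h0 (hfix 0)
  ext1 i
  rw [hall, hc]
  rfl
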